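/- Let α : 𝕊¹ → 𝕊²₁ be a closed embedded (injective) spacelike C¹ curve and let Γ = α(𝕊¹). Then the vertical orthogonal projection Π onto the plane P = {x₃ = 0}, Π(x) = (x₁, x₂, 0), is injective on Γ; that is, Γ is a graph over the plane P. -/

import Mathlib

/-!
If α is a closed embedded (injective on 𝕊¹ = ℝ/Tℤ) spacelike C¹ curve on the
pseudosphere with image Γ, then the vertical orthogonal projection
Π(x) = (x₁, x₂, 0) onto the plane P = {x₃ = 0} is injective on Γ, i.e. Γ is a
graph over P.
-/

/-- The Lorentzian inner product on ℝ³. -/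
def lorentz (x y : Fin 3 → ℝ) : ℝ := x 0 * y 0 + x 1 * y 1 - x 2 * y 2

/-- The unit pseudosphere (de Sitter surface) 𝕊²₁. -/
def pseudoSphere : Set (Fin 3 → ℝ) := {x | lorentz x x = 1}

/-- Vertical orthogonal projection Π(x) = (x₁, x₂, 0) onto the plane x₃ = 0. -/
def vertProj (x : Fin 3 → ℝ) : Fin 3 → ℝ := ![x 0, x 1, 0]

/-!
Identify the horizontal plane with `ℂ` and write `F` for the projected curve. On the pseudosphere
`|F|² = 1 + x₃²`, so `F` never vanishes and has a continuous angle `θ` on `ℝ`. If the curve is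
regular and nowhere timelike, the cross product of `F` and `F'` never vanishes, so `θ` is injective.
Over one period `θ` changes by a constant, so it is a homeomorphism of `ℝ`.

Suppose two parameters project to the same point, so that their angles differ by `p = 2πn`. Let `τ`
be the map that increases the angle by `p`. The height is periodic, hence attains its maximum and
its minimum, and comparing it with its composition with `τ` at these points produces `s` such that
`τ s` and `s` have the same height. The angle modulo `2π` and the height determine a point of the
pseudosphere, so embeddedness makes `τ s` and `s` congruent modulo the period, and then `τ` is a
translation by a multiple of the period.
-/

open Complex Function
open scoped AddConstMap

section Topology

theorem exists_comp_apply_eq_self {X β : Type*} [TopologicalSpace X] [PreconnectedSpace X]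
    [Nonempty X] [LinearOrder β] [TopologicalSpace β] [OrderClosedTopology β]
    {f : X → β} (hf : Continuous f) (hcomp : IsCompact (Set.range f))
    {τ : X → X} (hτ : Continuous τ) : ∃ x, f (τ x) = f x := by
  obtain ⟨_, ⟨a, rfl⟩, ha⟩ := hcomp.exists_isGreatest (Set.range_nonempty f)
  obtain ⟨_, ⟨b, rfl⟩, hb⟩ := hcomp.exists_isLeast (Set.range_nonempty f)
  exact intermediate_value_univ₂ (hf.comp hτ) hf (ha ⟨τ a, rfl⟩) (hb ⟨τ b, rfl⟩)

theorem exists_homeomorph_coe_eq_of_continuous_of_bijective {α β : Type*}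
    [ConditionallyCompleteLinearOrder α] [TopologicalSpace α] [OrderTopology α] [DenselyOrdered α]
    [LinearOrder β] [TopologicalSpace β] [OrderTopology β]
    {f : α → β} (hf : Continuous f) (hbij : Bijective f) : ∃ e : α ≃ₜ β, ⇑e = f := by
  rcases hf.strictMono_of_inj hbij.injective with hmono | hanti
  · exact ⟨(hmono.orderIsoOfSurjective f hbij.surjective).toHomeomorph, rfl⟩
  · let e : α ≃o βᵒᵈ :=
      hanti.dual_right.orderIsoOfSurjective (OrderDual.toDual ∘ f) hbij.surjective
    exact ⟨e.toHomeomorph, rfl⟩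

end Topology

section AddConstMap

variable {T c : ℝ}

theorem surjective_addConstMap_of_continuous (θ : ℝ →+c[T, c] ℝ) (hθ : Continuous θ)
    (hc : c ≠ 0) : Surjective θ := by
  intro y
  set n : ℤ := ⌊(y - θ 0) / c⌋
  have hy : (y - θ 0) / c * c = y - θ 0 := div_mul_cancel₀ _ hc
  have hval (m : ℤ) : θ (m • T) = θ 0 + m * c := by
    rw [AddConstMapClass.map_zsmul_const, zsmul_eq_mul]
  have hmem : y ∈ Set.uIcc (θ (n • T)) (θ ((n + 1) • T)) := by
    have hn : n ≤ (y - θ 0) / c := Int.floor_le _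
    have hn' : (y - θ 0) / c ≤ n + 1 := (Int.lt_floor_add_one _).le
    rw [hval, hval, Int.cast_add, Int.cast_one, Set.mem_uIcc]
    rcases le_total 0 c with h | h
    · left; constructor <;> nlinarith
    · right; constructor <;> nlinarith
  obtain ⟨s, -, hs⟩ := intermediate_value_uIcc hθ.continuousOn hmem
  exact ⟨s, hs⟩

theorem exists_homeomorph_coe_eq_addConstMap (hT : T ≠ 0) (θ : ℝ →+c[T, c] ℝ)
    (hθ : Continuous θ) (hinj : Injective θ) : ∃ e : ℝ ≃ₜ ℝ, ⇑e = θ := by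
  refine exists_homeomorph_coe_eq_of_continuous_of_bijective hθ
    ⟨hinj, surjective_addConstMap_of_continuous θ hθ fun hc ↦ hT (hinj ?_)⟩
  exact (AddConstMapClass.map_const θ).trans (by rw [add_eq_left, hc])

theorem addCircle_coe_eq_coe_iff {G : Type*} [AddCommGroup G] {p s t : G} :
    (s : AddCircle p) = t ↔ ∃ m : ℤ, s = t + m • p := by
  rw [eq_comm, QuotientAddGroup.eq, AddSubgroup.mem_zmultiples_iff]
  simp only [eq_neg_add_iff_add_eq, eq_comm]

theorem addCircle_coe_eq_of_addConstMap_eq_add {β : Type*} [LinearOrder β] [TopologicalSpace β]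
    [OrderClosedTopology β] (hT : T ≠ 0) (θ : ℝ →+c[T, c] ℝ) (hθ : Continuous θ)
    (hinj : Injective θ) {z : ℝ → β} (hz : Continuous z) (hzper : Periodic z T) {p : ℝ}
    (hsep : ∀ s t, θ s = θ t + p → z s = z t → (s : AddCircle T) = t)
    {s t : ℝ} (hst : θ s = θ t + p) : (s : AddCircle T) = t := by
  obtain ⟨e, he⟩ := exists_homeomorph_coe_eq_addConstMap hT θ hθ hinj
  obtain ⟨u, hu⟩ := exists_comp_apply_eq_self hz (hzper.compact_of_continuous hT hz)
    (τ := fun s ↦ e.symm (θ s + p)) (by fun_prop)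
  have hshift : θ (e.symm (θ u + p)) = θ u + p := by rw [← he, e.apply_symm_apply]
  obtain ⟨m, hm⟩ := addCircle_coe_eq_coe_iff.1 (hsep _ _ hshift hu)
  have hp : p = m • c := by
    rw [hm, AddConstMapClass.map_add_zsmul] at hshift
    exact (add_left_cancel hshift).symm
  refine addCircle_coe_eq_coe_iff.2 ⟨m, hinj ?_⟩
  rw [hst, hp, AddConstMapClass.map_add_zsmul]

end AddConstMap

section Angle

theorem injective_of_hasDerivAt_ne_zero {f f' : ℝ → ℝ} (hf : ∀ s, HasDerivAt f (f' s) s)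
    (hf' : ∀ s, f' s ≠ 0) : Injective f := by
  refine Injective.of_lt_imp_ne fun a b hab h ↦ ?_
  obtain ⟨s, -, hs⟩ := exists_hasDerivAt_eq_zero hab
    (fun x _ ↦ (hf x).continuousAt.continuousWithinAt) h fun x _ ↦ hf x
  exact hf' s hs

/-- `θ` is a choice of argument for the complex-valued function `F`: a polar angle, not reduced
modulo `2π`. Where `F` vanishes, `θ` is unconstrained. -/
def IsAngle {X : Type*} (F : X → ℂ) (θ : X → ℝ) : Prop :=
  ∀ x, F x = ‖F x‖ * Circle.exp (θ x)

theorem exists_continuous_isAngle {X : Type*} [TopologicalSpace X] [SimplyConnectedSpace X]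
    [LocallyPathConnectedSpace X] {F : X → ℂ} (hF : Continuous F) (hF₀ : ∀ x, F x ≠ 0) :
    ∃ θ : X → ℝ, Continuous θ ∧ IsAngle F θ := by
  have huniv : IsSimplyConnected (Set.univ : Set X) :=
    (Homeomorph.Set.univ X).toHomotopyEquiv.simplyConnectedSpace
  obtain ⟨w, hw, hexp⟩ := exists_continuousOn_eqOn_exp_comp huniv isOpen_univ hF.continuousOn
    (by simpa using hF₀)
  refine ⟨fun x ↦ (w x).im, continuous_im.comp (continuousOn_univ.1 hw), fun x ↦ ?_⟩
  rw [← hexp (Set.mem_univ x), comp_apply, norm_exp, Circle.coe_exp, ofReal_exp, ← Complex.exp_add,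
    re_add_im]

theorem exists_int_eq_add_of_circle_exp_eq {X : Type*} [TopologicalSpace X] [PreconnectedSpace X]
    [Nonempty X] {θ₁ θ₂ : X → ℝ} (h₁ : Continuous θ₁) (h₂ : Continuous θ₂)
    (h : ∀ x, Circle.exp (θ₁ x) = Circle.exp (θ₂ x)) :
    ∃ k : ℤ, ∀ x, θ₁ x = θ₂ x + k * (2 * Real.pi) := by
  obtain ⟨x₀⟩ := ‹Nonempty X›
  obtain ⟨k, hk⟩ := Circle.exp_eq_exp.1 (h x₀)
  refine ⟨k, congrFun (Circle.isCoveringMap_exp.eq_of_comp_eq h₁ (by fun_prop) ?_ x₀ hk)⟩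
  exact funext fun x ↦ (h x).trans (Circle.exp_eq_exp.2 ⟨-k, by push_cast; ring⟩)

theorem hasDerivAt_of_hasDerivAt_exp {w : ℝ → ℂ} {F' : ℂ} {s : ℝ} (hw : ContinuousAt w s)
    (hF : HasDerivAt (fun t ↦ exp (w t)) F' s) : HasDerivAt w (F' / exp (w s)) s := by
  have hexp : HasFDerivAt exp (exp (w s) • (1 : ℂ →L[ℝ] ℂ)) (w s) :=
    (hasDerivAt_exp (w s)).complexToReal_fderiv
  have hinv : LeftInverse ((exp (w s))⁻¹ • (1 : ℂ →L[ℝ] ℂ)) (exp (w s) • (1 : ℂ →L[ℝ] ℂ)) :=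
    fun z ↦ inv_mul_cancel_left₀ (Complex.exp_ne_zero _) z
  refine (hexp.of_comp_of_leftInverse hw hF.hasFDerivAt .rfl hinv).hasDerivAt.congr_deriv ?_
  simp [div_eq_inv_mul]

namespace IsAngle

variable {X : Type*} {F : X → ℂ} {θ : X → ℝ} {x y : X}

theorem circle_exp_eq (h : IsAngle F θ) (hx : F x ≠ 0) (hxy : F x = F y) :
    Circle.exp (θ x) = Circle.exp (θ y) := by
  have hpolar : (‖F x‖ : ℂ) * Circle.exp (θ x) = ‖F x‖ * Circle.exp (θ y) := by
    rw [← h x, hxy, ← h y]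
  exact Circle.ext (mul_left_cancel₀ (by simpa using hx) hpolar)

theorem eq_of_norm_eq (h : IsAngle F θ) (hnorm : ‖F x‖ = ‖F y‖)
    (hθ : Circle.exp (θ x) = Circle.exp (θ y)) : F x = F y := by
  rw [h x, h y, hnorm, hθ]

end IsAngle

theorem IsAngle.hasDerivAt {F : ℝ → ℂ} {θ : ℝ → ℝ} {s : ℝ} (h : IsAngle F θ) (hF₀ : F s ≠ 0)
    (hF : DifferentiableAt ℝ F s) (hθ : ContinuousAt θ s) :
    HasDerivAt θ (logDeriv F s).im s := by
  let w : ℝ → ℂ := fun t ↦ Real.log ‖F t‖ + θ t * I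
  have hexp {t : ℝ} (ht : F t ≠ 0) : exp (w t) = F t := by
    rw [Complex.exp_add, ← ofReal_exp, Real.exp_log (norm_pos_iff.2 ht), ← Circle.coe_exp, ← h t]
  have hw : ContinuousAt w s := by
    have hlog : ContinuousAt (fun t ↦ Real.log ‖F t‖) s :=
      hF.continuousAt.norm.log (norm_ne_zero_iff.2 hF₀)
    fun_prop
  have hw' : HasDerivAt w (logDeriv F s) s := by
    rw [logDeriv_apply, ← hexp hF₀]
    exact hasDerivAt_of_hasDerivAt_exp hw <| hF.hasDerivAt.congr_of_eventuallyEq <|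
      (hF.continuousAt.eventually_ne hF₀).mono fun t ↦ hexp
  have him : imCLM ∘ w = θ := by funext t; simp [w]
  exact him ▸ imCLM.hasFDerivAt.comp_hasDerivAt s hw'

theorem exists_addConstMap_isAngle {F : ℝ → ℂ} {T : ℝ} (hper : Periodic F T)
    (hF : Differentiable ℝ F) (hF₀ : ∀ s, F s ≠ 0) (hrot : ∀ s, (logDeriv F s).im ≠ 0) :
    ∃ (c : ℝ) (θ : ℝ →+c[T, c] ℝ), Continuous θ ∧ Injective θ ∧ IsAngle F θ := by
  obtain ⟨θ, hθ, hangle⟩ := exists_continuous_isAngle hF.continuous hF₀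
  obtain ⟨k, hk⟩ := exists_int_eq_add_of_circle_exp_eq (θ₁ := fun s ↦ θ (s + T)) (by fun_prop) hθ
    fun s ↦ hangle.circle_exp_eq (hF₀ _) (hper s)
  exact ⟨k * (2 * Real.pi), ⟨θ, hk⟩, hθ,
    injective_of_hasDerivAt_ne_zero (fun s ↦ hangle.hasDerivAt (hF₀ s) (hF s) hθ.continuousAt) hrot,
    hangle⟩

end Angle

section Lorentz

theorem lorentz_comm (x y : Fin 3 → ℝ) : lorentz x y = lorentz y x := by
  simp only [lorentz, mul_comm]

theorem hasDerivAt_lorentz {α β : ℝ → Fin 3 → ℝ} {α' β' : Fin 3 → ℝ} {s : ℝ}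
    (hα : HasDerivAt α α' s) (hβ : HasDerivAt β β' s) :
    HasDerivAt (fun t ↦ lorentz (α t) (β t)) (lorentz α' (β s) + lorentz (α s) β') s := by
  rw [hasDerivAt_pi] at hα hβ
  refine ((((hα 0).mul (hβ 0)).add ((hα 1).mul (hβ 1))).sub ((hα 2).mul (hβ 2))).congr_deriv ?_
  simp only [lorentz]
  ring

theorem lorentz_deriv_eq_zero {α : ℝ → Fin 3 → ℝ} {s : ℝ} (hα : DifferentiableAt ℝ α s)
    (hS : ∀ t, α t ∈ pseudoSphere) : lorentz (α s) (deriv α s) = 0 := by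
  have hconst : (fun t ↦ lorentz (α t) (α t)) = fun _ ↦ 1 := funext hS
  have hderiv := hasDerivAt_lorentz hα.hasDerivAt hα.hasDerivAt
  rw [hconst, lorentz_comm (deriv α s)] at hderiv
  linarith [hderiv.unique (hasDerivAt_const s 1)]

theorem sq_cross_eq_of_lorentz_eq_zero {x v : Fin 3 → ℝ} (hx : x ∈ pseudoSphere)
    (hxv : lorentz x v = 0) :
    (x 0 * v 1 - x 1 * v 0) ^ 2 = (1 + x 2 ^ 2) * lorentz v v + v 2 ^ 2 := by
  have hnorm : x 0 ^ 2 + x 1 ^ 2 = 1 + x 2 ^ 2 := by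
    have hx' : x 0 * x 0 + x 1 * x 1 - x 2 * x 2 = 1 := hx
    linarith
  have hdot : x 0 * v 0 + x 1 * v 1 = x 2 * v 2 := sub_eq_zero.1 hxv
  calc (x 0 * v 1 - x 1 * v 0) ^ 2
      = (x 0 ^ 2 + x 1 ^ 2) * (v 0 ^ 2 + v 1 ^ 2) - (x 0 * v 0 + x 1 * v 1) ^ 2 := by ring
    _ = (1 + x 2 ^ 2) * (v 0 ^ 2 + v 1 ^ 2) - (x 2 * v 2) ^ 2 := by rw [hnorm, hdot]
    _ = (1 + x 2 ^ 2) * lorentz v v + v 2 ^ 2 := by rw [lorentz]; ring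

theorem cross_ne_zero_of_lorentz_nonneg {x v : Fin 3 → ℝ} (hx : x ∈ pseudoSphere)
    (hxv : lorentz x v = 0) (hv : 0 ≤ lorentz v v) (hv_ne : v ≠ 0) :
    x 0 * v 1 - x 1 * v 0 ≠ 0 := by
  intro hcross
  have hsum : (1 + x 2 ^ 2) * lorentz v v + v 2 ^ 2 = 0 := by
    rw [← sq_cross_eq_of_lorentz_eq_zero hx hxv, hcross, zero_pow two_ne_zero]
  have hvv : lorentz v v = 0 := by nlinarith [mul_nonneg (sq_nonneg (x 2)) hv, sq_nonneg (v 2)]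
  have hv₂ : v 2 = 0 := by simpa [hvv] using hsum
  have hv₀₁ : v 0 ^ 2 + v 1 ^ 2 = 0 := by simpa [lorentz, hv₂, sq] using hvv
  obtain ⟨hv₀, hv₁⟩ : v 0 = 0 ∧ v 1 = 0 := by
    constructor <;> nlinarith [sq_nonneg (v 0), sq_nonneg (v 1)]
  exact hv_ne (funext fun i ↦ by fin_cases i <;> assumption)

/-- The horizontal part `x₁ + i x₂` of a point of ℝ³: the projection `vertProj`, with the plane
`x₃ = 0` identified with `ℂ` so that polar angles are available. -/
noncomputable def horizontal : (Fin 3 → ℝ) →L[ℝ] ℂ :=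
  equivRealProdCLM.symm ∘L (ContinuousLinearMap.proj 0).prod (ContinuousLinearMap.proj 1)

@[simp]
theorem horizontal_re (x : Fin 3 → ℝ) : (horizontal x).re = x 0 := by simp [horizontal]

@[simp]
theorem horizontal_im (x : Fin 3 → ℝ) : (horizontal x).im = x 1 := by simp [horizontal]

theorem vertProj_eq_vertProj_iff {x y : Fin 3 → ℝ} :
    vertProj x = vertProj y ↔ horizontal x = horizontal y := by
  simp [vertProj, Complex.ext_iff]

theorem eq_of_horizontal_eq {x y : Fin 3 → ℝ} (h : horizontal x = horizontal y)
    (h₂ : x 2 = y 2) : x = y := by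
  obtain ⟨h₀, h₁⟩ : x 0 = y 0 ∧ x 1 = y 1 := by simpa [Complex.ext_iff] using h
  funext i
  fin_cases i <;> assumption

theorem sq_norm_horizontal {x : Fin 3 → ℝ} (hx : x ∈ pseudoSphere) :
    ‖horizontal x‖ ^ 2 = 1 + x 2 ^ 2 := by
  have hx' : x 0 * x 0 + x 1 * x 1 - x 2 * x 2 = 1 := hx
  rw [Complex.sq_norm, normSq_apply, horizontal_re, horizontal_im]
  linarith

theorem horizontal_ne_zero {x : Fin 3 → ℝ} (hx : x ∈ pseudoSphere) : horizontal x ≠ 0 := by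
  intro h
  have hnorm := sq_norm_horizontal hx
  rw [h, norm_zero] at hnorm
  nlinarith [sq_nonneg (x 2)]

theorem norm_horizontal_eq {x y : Fin 3 → ℝ} (hx : x ∈ pseudoSphere) (hy : y ∈ pseudoSphere)
    (h₂ : x 2 = y 2) : ‖horizontal x‖ = ‖horizontal y‖ := by
  rw [← sq_eq_sq₀ (norm_nonneg _) (norm_nonneg _), sq_norm_horizontal hx, sq_norm_horizontal hy, h₂]

theorem im_div_horizontal (x v : Fin 3 → ℝ) :
    (horizontal v / horizontal x).im = (x 0 * v 1 - x 1 * v 0) / normSq (horizontal x) := by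
  rw [div_im, horizontal_re, horizontal_im, horizontal_re, horizontal_im]
  ring

theorem im_logDeriv_horizontal_ne_zero {α : ℝ → Fin 3 → ℝ} {s : ℝ} (hα : DifferentiableAt ℝ α s)
    (hS : ∀ t, α t ∈ pseudoSphere) (hreg : deriv α s ≠ 0)
    (hcausal : 0 ≤ lorentz (deriv α s) (deriv α s)) :
    (logDeriv (fun t ↦ horizontal (α t)) s).im ≠ 0 := by
  have hderiv : deriv (fun t ↦ horizontal (α t)) s = horizontal (deriv α s) :=
    (horizontal.hasFDerivAt.comp_hasDerivAt s hα.hasDerivAt).deriv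
  rw [logDeriv_apply, hderiv, im_div_horizontal]
  exact div_ne_zero
    (cross_ne_zero_of_lorentz_nonneg (hS s) (lorentz_deriv_eq_zero hα hS) hcausal hreg)
    (normSq_pos.2 (horizontal_ne_zero (hS s))).ne'

end Lorentz

theorem stmt_8_general {T : ℝ} (hT : T ≠ 0) {α : ℝ → Fin 3 → ℝ} (hper : Periodic α T)
    (hα : Differentiable ℝ α) (hS : ∀ s, α s ∈ pseudoSphere) (hreg : ∀ s, deriv α s ≠ 0)
    (hcausal : ∀ s, 0 ≤ lorentz (deriv α s) (deriv α s))
    (hinj : ∀ s t, α s = α t → (s : AddCircle T) = t) :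
    Set.InjOn vertProj (Set.range α) := by
  have hF₀ (s : ℝ) : horizontal (α s) ≠ 0 := horizontal_ne_zero (hS s)
  obtain ⟨c, θ, hθ, hθinj, hangle⟩ := exists_addConstMap_isAngle (hper.comp horizontal)
    (horizontal.differentiable.comp hα) hF₀
    fun s ↦ im_logDeriv_horizontal_ne_zero (hα s) hS (hreg s) (hcausal s)
  rintro _ ⟨s, rfl⟩ _ ⟨t, rfl⟩ hproj
  obtain ⟨n, hn⟩ := Circle.exp_eq_exp.1
    (hangle.circle_exp_eq (hF₀ s) (vertProj_eq_vertProj_iff.1 hproj))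
  have hsep (u v : ℝ) (huv : θ u = θ v + n * (2 * Real.pi)) (hz : α u 2 = α v 2) :
      (u : AddCircle T) = v :=
    hinj u v <| eq_of_horizontal_eq
      (hangle.eq_of_norm_eq (norm_horizontal_eq (hS u) (hS v) hz) (Circle.exp_eq_exp.2 ⟨n, huv⟩)) hz
  have hst : (s : AddCircle T) = t := addCircle_coe_eq_of_addConstMap_eq_add hT θ hθ hθinj
    ((continuous_apply 2).comp hα.continuous) (hper.comp fun x : Fin 3 → ℝ ↦ x 2) hsep hn
  rw [← hper.lift_coe s, hst, hper.lift_coe]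

theorem stmt_8 (T : ℝ) (hT : 0 < T) (α : ℝ → (Fin 3 → ℝ))
    (hper : Function.Periodic α T) (hα : ContDiff ℝ 1 α)
    (hS : ∀ s : ℝ, α s ∈ pseudoSphere)
    (hsp : ∀ s : ℝ, 0 < lorentz (deriv α s) (deriv α s))
    (hinj : ∀ s t : ℝ, α s = α t → (s : AddCircle T) = (t : AddCircle T)) :
    Set.InjOn vertProj (Set.range α) := by
  refine stmt_8_general hT.ne' hper (hα.differentiable one_ne_zero) hS (fun s hs ↦ ?_)
    (fun s ↦ (hsp s).le) hinj
  simpa [hs, lorentz] using hsp s
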